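/- Let ε > 0 and let λ : (0,∞) → (0,∞) satisfy lim_{t→∞} λ(t) = 0 and lim_{t→∞} (t + ln(λ(t)ε²)) = ∞. Define σ(λ,ε) := 1/cosh(ε√(2λ)) and v_σ(t) = e^{−t}/((1−σ) + σe^{−t}). Then lim_{t→∞} e^t λ(t) ε² v_{σ(λ(t),ε)}(t) = 1. -/

import Mathlib

/-!
Since `e^t · a · v_σ(t) = a / ((1 - σ) + σ e^{-t})`, the limit is `1` as soon as the denominator is
asymptotic to `a = λ ε²`. Its first term is, because `1 - sech x = 2 sinh²(x/2) / cosh x ∼ x²/2`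
with `x = ε √(2λ)`. Its second term is negligible, because `t + ln a → ∞` says exactly that
`e^{-t} = o(a)`.
-/

open Asymptotics Filter Topology

/-- The Laplace transform `E[e^{-λτ}] = sech(ε √(2λ))` of the first exit time `τ` of standard
Brownian motion from `(-ε, ε)`, given by its closed form. -/
noncomputable def exitTimeLaplace (ε lam : ℝ) : ℝ :=
  1 / Real.cosh (ε * Real.sqrt (2 * lam))

/-- The partition function `v_σ(t)` of the simplified self-repelling branching Brownian motion
for the parameter `s = σ`, given by its closed form. -/
noncomputable def partitionFunction (s t : ℝ) : ℝ :=
  Real.exp (-t) / ((1 - s) + s * Real.exp (-t))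

theorem one_sub_one_div_cosh (x : ℝ) :
    1 - 1 / Real.cosh x = 2 * Real.sinh (x / 2) ^ 2 / Real.cosh x := by
  have hcosh : Real.cosh x = 1 + 2 * Real.sinh (x / 2) ^ 2 := by
    have h := Real.cosh_two_mul (x / 2)
    rw [mul_div_cancel₀ x two_ne_zero, Real.cosh_sq] at h
    linarith
  rw [one_sub_div (Real.cosh_pos x).ne']
  congr 1
  linarith

theorem isEquivalent_one_sub_one_div_cosh :
    (fun x : ℝ => 1 - 1 / Real.cosh x) ~[𝓝 0] fun x => x ^ 2 / 2 := by
  have hhalf : Tendsto (fun x : ℝ => x / 2) (𝓝 0) (𝓝 0) := by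
    simpa only [id, zero_div] using (continuous_id.div_const (2 : ℝ)).tendsto 0
  have hsinh : (fun x : ℝ => Real.sinh (x / 2)) ~[𝓝 0] fun x => x / 2 :=
    Real.isEquivalent_sinh.comp_tendsto hhalf
  have hcosh : Real.cosh ~[𝓝 0] Function.const ℝ (1 : ℝ) :=
    (isEquivalent_const_iff_tendsto one_ne_zero).2
      (Real.cosh_zero ▸ Real.continuous_cosh.tendsto 0)
  have htwo : (fun _ : ℝ => (2 : ℝ)) ~[𝓝 0] fun _ => 2 := .refl
  simp only [one_sub_one_div_cosh]
  refine ((htwo.mul (hsinh.pow 2)).div hcosh).congr_right (.of_forall fun x => ?_)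
  simp only [Pi.div_apply, Pi.mul_apply, Pi.pow_apply, Function.const_apply]
  ring

section ExitTime

variable (ε : ℝ)

theorem tendsto_mul_sqrt_two_mul_zero :
    Tendsto (fun lam => ε * Real.sqrt (2 * lam)) (𝓝 0) (𝓝 0) := by
  have hcont : Continuous fun lam => ε * Real.sqrt (2 * lam) := by fun_prop
  simpa only [mul_zero, Real.sqrt_zero] using hcont.tendsto 0

theorem continuous_exitTimeLaplace : Continuous (exitTimeLaplace ε) :=
  continuous_const.div (by fun_prop) fun _ => (Real.cosh_pos _).ne'

theorem exitTimeLaplace_zero_right : exitTimeLaplace ε 0 = 1 := by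
  simp [exitTimeLaplace]

-- Only a one-sided limit: `Real.sqrt` vanishes on negative arguments.
theorem isEquivalent_one_sub_exitTimeLaplace :
    (fun lam => 1 - exitTimeLaplace ε lam) ~[𝓝[≥] 0] fun lam => lam * ε ^ 2 := by
  refine ((isEquivalent_one_sub_one_div_cosh.comp_tendsto
    (tendsto_mul_sqrt_two_mul_zero ε)).mono nhdsWithin_le_nhds).congr_right ?_
  filter_upwards [self_mem_nhdsWithin] with lam hlam
  have hlam' : 0 ≤ 2 * lam := mul_nonneg zero_le_two hlam
  simp only [Function.comp_apply, mul_pow, Real.sq_sqrt hlam']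
  ring

end ExitTime

section JointLimit

variable {ι : Type*} {l : Filter ι}

theorem isLittleO_exp_neg_of_tendsto_add_log {t a : ι → ℝ} (ha : ∀ᶠ i in l, a i ≠ 0)
    (h : Tendsto (fun i => t i + Real.log (a i)) l atTop) :
    (fun i => Real.exp (-t i)) =o[l] a := by
  refine IsLittleO.of_abs_right (isLittleO_of_tendsto' ?_ ?_)
  · filter_upwards [ha] with i hi hzero
    exact absurd (abs_eq_zero.1 hzero) hi
  · refine (Real.tendsto_exp_neg_atTop_nhds_zero.comp h).congr' ?_
    filter_upwards [ha] with i hi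
    rw [Function.comp_apply, neg_add, ← sub_eq_add_neg, Real.exp_sub, Real.exp_log_eq_abs hi]

theorem exp_mul_mul_partitionFunction (s t a : ℝ) :
    Real.exp t * a * partitionFunction s t = a / ((1 - s) + s * Real.exp (-t)) := by
  have hexp : Real.exp t * Real.exp (-t) = 1 := by
    rw [← Real.exp_add, add_neg_cancel, Real.exp_zero]
  rw [partitionFunction, mul_div_assoc', mul_right_comm, hexp, one_mul]

theorem tendsto_exp_mul_mul_partitionFunction {s t a : ι → ℝ} (ha : ∀ᶠ i in l, a i ≠ 0)
    (hs : s =O[l] fun _ => (1 : ℝ)) (hsa : (fun i => 1 - s i) ~[l] a)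
    (hta : (fun i => Real.exp (-t i)) =o[l] a) :
    Tendsto (fun i => Real.exp (t i) * a i * partitionFunction (s i) (t i)) l (𝓝 1) := by
  have hsmall : (fun i => s i * Real.exp (-t i)) =o[l] a := by
    simpa only [one_mul] using hs.mul_isLittleO hta
  have hden : Tendsto (fun i => ((1 - s i) + s i * Real.exp (-t i)) / a i) l (𝓝 1) :=
    (isEquivalent_iff_tendsto_one ha).1 (hsa.add_isLittleO hsmall)
  simpa only [exp_mul_mul_partitionFunction, inv_div, inv_one] using hden.inv₀ one_ne_zero

theorem stmt6_general {ε : ℝ} (hε : ε ≠ 0) {lam t : ι → ℝ} (hpos : ∀ᶠ i in l, 0 < lam i)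
    (h0 : Tendsto lam l (𝓝 0))
    (h1 : Tendsto (fun i => t i + Real.log (lam i * ε ^ 2)) l atTop) :
    Tendsto (fun i => Real.exp (t i) * (lam i * ε ^ 2) *
      partitionFunction (exitTimeLaplace ε (lam i)) (t i)) l (𝓝 1) := by
  have ha : ∀ᶠ i in l, lam i * ε ^ 2 ≠ 0 :=
    hpos.mono fun i hi => mul_ne_zero hi.ne' (pow_ne_zero 2 hε)
  have hσ : Tendsto (fun i => exitTimeLaplace ε (lam i)) l (𝓝 1) :=
    exitTimeLaplace_zero_right ε ▸ ((continuous_exitTimeLaplace ε).tendsto 0).comp h0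
  have h0' : Tendsto lam l (𝓝[≥] 0) :=
    tendsto_nhdsWithin_iff.2 ⟨h0, hpos.mono fun i hi => hi.le⟩
  exact tendsto_exp_mul_mul_partitionFunction ha (hσ.isBigO_one ℝ)
    ((isEquivalent_one_sub_exitTimeLaplace ε).comp_tendsto h0')
    (isLittleO_exp_neg_of_tendsto_add_log ha h1)

end JointLimit

/-- Lemma 5.1: if `λ(t) ↓ 0` and `t + ln(λ(t)ε²) → ∞`, then with
`σ(λ,ε) = sech(ε√(2λ))` and `v_σ(t) = e^{-t}/((1-σ) + σe^{-t})` one has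
`e^t λ(t) ε² v_{σ(λ(t),ε)}(t) → 1`. -/
theorem stmt6 (ε : ℝ) (hε : 0 < ε) (lam : ℝ → ℝ) (hpos : ∀ t > (0 : ℝ), 0 < lam t)
    (h0 : Filter.Tendsto lam Filter.atTop (nhds 0))
    (h1 : Filter.Tendsto (fun t => t + Real.log (lam t * ε ^ 2)) Filter.atTop Filter.atTop)
    (σ : ℝ → ℝ) (hσ : ∀ t, σ t = 1 / Real.cosh (ε * Real.sqrt (2 * lam t)))
    (v : ℝ → ℝ → ℝ)
    (hv : ∀ s u, v s u = Real.exp (-u) / ((1 - s) + s * Real.exp (-u))) :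
    Filter.Tendsto (fun t => Real.exp t * (lam t * ε ^ 2) * v (σ t) t)
      Filter.atTop (nhds 1) := by
  obtain rfl : σ = fun t => exitTimeLaplace ε (lam t) := funext hσ
  obtain rfl : v = partitionFunction := funext₂ hv
  exact stmt6_general hε.ne' ((eventually_gt_atTop 0).mono hpos) h0 h1
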